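/- Let q be a complex-valued quadratic form on ℝ^{2n} with Re q(X) ≤ 0 for all X ∈ ℝ^{2n}, with Hamilton map F and singular space S. Then for every X ∈ ℝ^{2n} with X ∉ S, one has Σ_{j=0}^{2n−1} Re q((Im F)^j X) < 0. Consequently, if S is symplectic, the quadratic form r(X) = Σ_{j=0}^{2n−1} Re q((Im F)^j X) is negative definite on the symplectic orthogonal S^{σ⊥}. -/

import Mathlib

open Matrix

/-- The canonical symplectic form `σ((x,ξ),(y,η)) = ξ·y − x·η` on `R^{n+n}`,
where the first `n` coordinates are `x` and the last `n` coordinates are `ξ`.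
Over `R = ℂ` this is the ℂ-bilinear extension of the real canonical symplectic form. -/
def symp {R : Type*} [CommRing R] {n : ℕ} (X Y : Fin (n + n) → R) : R :=
  ∑ i : Fin n, (X (Fin.natAdd n i) * Y (Fin.castAdd n i)
    - X (Fin.castAdd n i) * Y (Fin.natAdd n i))

/-- The canonical inclusion `ℝ^{2n} ⊆ ℂ^{2n}`. -/
def cx {n : ℕ} (X : Fin (n + n) → ℝ) : Fin (n + n) → ℂ := fun i => (X i : ℂ)

/-- The real part of a complex matrix. -/
def ReM {n : ℕ} (F : Matrix (Fin (n + n)) (Fin (n + n)) ℂ) :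
    Matrix (Fin (n + n)) (Fin (n + n)) ℝ := F.map Complex.re

/-- The imaginary part of a complex matrix. -/
def ImM {n : ℕ} (F : Matrix (Fin (n + n)) (Fin (n + n)) ℂ) :
    Matrix (Fin (n + n)) (Fin (n + n)) ℝ := F.map Complex.im

/-- The singular space `S = (⋂_{j=0}^{2n−1} Ker[Re F ∘ (Im F)^j]) ∩ ℝ^{2n}`
associated to a quadratic form with Hamilton map `F`. -/
def singularSpace {n : ℕ} (F : Matrix (Fin (n + n)) (Fin (n + n)) ℂ) :
    Set (Fin (n + n) → ℝ) :=
  {X | ∀ j < n + n, (ReM F * ImM F ^ j).mulVec X = 0}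

theorem re_symp_aux {n : ℕ} (F : Matrix (Fin (n + n)) (Fin (n + n)) ℂ)
    (X Y : Fin (n + n) → ℝ) :
    (symp (cx X) (F.mulVec (cx Y))).re = symp X ((ReM F).mulVec Y) := by
  have h : ∀ i, (F.mulVec (cx Y) i).re = (ReM F).mulVec Y i := by
    intro i
    simp [Matrix.mulVec, dotProduct, cx, ReM]
  simp [symp, ← h, cx]

theorem re_symp_aux2 {n : ℕ} (X Y : Fin (n + n) → ℂ) :
    symp X Y = - symp Y X := by
  simp only [symp, ← Finset.sum_neg_distrib]
  exact Finset.sum_congr rfl fun i _ => by ring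

theorem symp_expand {n : ℕ} (A : Matrix (Fin (n + n)) (Fin (n + n)) ℝ)
    (X Y : Fin (n + n) → ℝ) (t : ℝ) :
    symp (X + t • Y) (A.mulVec (X + t • Y)) = symp X (A.mulVec X)
      + t * symp X (A.mulVec Y) + t * symp Y (A.mulVec X) + t ^ 2 * symp Y (A.mulVec Y) := by
  rw [Matrix.mulVec_add, Matrix.mulVec_smul]
  simp only [symp, Finset.mul_sum, ← Finset.sum_add_distrib, Pi.add_apply, Pi.smul_apply,
    smul_eq_mul]
  exact Finset.sum_congr rfl fun i _ => by ring

theorem symp_nondeg {n : ℕ} (Z : Fin (n + n) → ℝ) (h : ∀ Y, symp Y Z = 0) : Z = 0 := by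
  have h1 := h (Fin.append (fun i => -Z (Fin.natAdd n i)) (fun i => Z (Fin.castAdd n i)))
  simp only [symp, Fin.append_left, Fin.append_right] at h1
  rw [Finset.sum_eq_zero_iff_of_nonneg (fun i _ => by
    nlinarith [mul_self_nonneg (Z (Fin.natAdd n i)), mul_self_nonneg (Z (Fin.castAdd n i))])] at h1
  ext i
  refine Fin.addCases (fun i => ?_) (fun i => ?_) i
  all_goals
    have h2 := h1 i (Finset.mem_univ _)
    simp only [Pi.zero_apply]
    apply mul_self_eq_zero.mp
    nlinarith [mul_self_nonneg (Z (Fin.natAdd n i)), mul_self_nonneg (Z (Fin.castAdd n i))]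

theorem kernel_aux {n : ℕ} (A : Matrix (Fin (n + n)) (Fin (n + n)) ℝ)
    (hsym : ∀ X Y, symp X (A.mulVec Y) = symp Y (A.mulVec X))
    (hneg : ∀ X, symp X (A.mulVec X) ≤ 0) (X : Fin (n + n) → ℝ)
    (h0 : symp X (A.mulVec X) = 0) : A.mulVec X = 0 := by
  apply symp_nondeg
  intro Y
  have hc := hneg Y
  have key : ∀ t : ℝ, 2 * t * symp Y (A.mulVec X) + t ^ 2 * symp Y (A.mulVec Y) ≤ 0 := by
    intro t
    have := hneg (X + t • Y)
    rw [symp_expand, h0, hsym X Y] at this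
    linarith
  generalize symp Y (A.mulVec X) = b at *
  generalize symp Y (A.mulVec Y) = c at *
  have h1 := key (b / (1 - c))
  have hp : 0 < 1 - c := by linarith
  have h2 : 2 * (b / (1 - c)) * b + (b / (1 - c)) ^ 2 * c = (b / (1 - c)) ^ 2 * (2 - c) := by
    field_simp
    ring
  rw [h2] at h1
  have h3 : (b / (1 - c)) ^ 2 = 0 := by
    nlinarith [sq_nonneg (b / (1 - c))]
  have h4 : b / (1 - c) = 0 := by simpa using h3
  rcases div_eq_zero_iff.mp h4 with h | h
  · exact h
  · linarith

/-- Let `q` be a complex-valued quadratic form on `ℝ^{2n}` with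
`Re q ≤ 0`, Hamilton map `F` and singular space `S`. Then for every `X ∉ S`,
`Σ_{j=0}^{2n−1} Re q((Im F)^j X) < 0`. Consequently, if `S` is symplectic, the
quadratic form `r(X) = Σ_{j=0}^{2n−1} Re q((Im F)^j X)` is negative definite on
the symplectic orthogonal `S^{σ⊥}`. -/
theorem sum_re_q_iterates_neg_outside_singularSpace
    (n : ℕ) (hn : 1 ≤ n)
    (q : (Fin (n + n) → ℂ) → ℂ)
    (F : Matrix (Fin (n + n)) (Fin (n + n)) ℂ)
    (hq : ∀ X : Fin (n + n) → ℂ, q X = symp X (F.mulVec X))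
    (hskew : ∀ X Y : Fin (n + n) → ℂ, symp (F.mulVec X) Y = -symp X (F.mulVec Y))
    (hre : ∀ X : Fin (n + n) → ℝ, (q (cx X)).re ≤ 0) :
    (∀ X : Fin (n + n) → ℝ, X ∉ singularSpace F →
      ∑ j ∈ Finset.range (n + n), (q (cx ((ImM F ^ j).mulVec X))).re < 0) ∧
    ((∀ X ∈ singularSpace F, (∀ Y ∈ singularSpace F, symp X Y = 0) → X = 0) →
      ∀ X : Fin (n + n) → ℝ, (∀ Y ∈ singularSpace F, symp X Y = 0) → X ≠ 0 →
        ∑ j ∈ Finset.range (n + n), (q (cx ((ImM F ^ j).mulVec X))).re < 0) := by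
  have main : ∀ X : Fin (n + n) → ℝ, X ∉ singularSpace F →
      ∑ j ∈ Finset.range (n + n), (q (cx ((ImM F ^ j).mulVec X))).re < 0 := by
    intro X hX
    have hsym : ∀ X Y, symp X ((ReM F).mulVec Y) = symp Y ((ReM F).mulVec X) := by
      intro X Y
      rw [← re_symp_aux, ← re_symp_aux, re_symp_aux2, hskew, neg_neg]
    have hneg : ∀ X, symp X ((ReM F).mulVec X) ≤ 0 := by
      intro X
      rw [← re_symp_aux, ← hq]
      exact hre X
    apply Finset.sum_neg' (fun j _ => hre _)
    by_contra hcon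
    push Not at hcon
    apply hX
    intro j hj
    rw [← Matrix.mulVec_mulVec]
    apply kernel_aux _ hsym hneg
    have h1 := hcon j (Finset.mem_range.mpr hj)
    rw [hq, re_symp_aux] at h1
    exact le_antisymm (hneg _) h1
  refine ⟨main, fun hS X hX hX0 => main X fun hXS => hX0 (hS X hXS hX)⟩
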